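/- arXiv:1712.07445 — 5 statements merged into one kernel-verified Lean document; each statement's English description precedes it below -/
import Mathlib

section
/- Let S be a finite index set with |S| = k ≥ 1, let Dom_i (i ∈ S) be finite domains, and let R ⊆ Π_{i∈S} Dom_i be a finite relation. Let ℓ = max over i ∈ S and v ∈ Dom_i of the number of tuples x ∈ R with x_i = v (the maximum degree of R), and let deg(R) denote the least integer d such that R can be written as a disjoint union of d matchings. Then ℓ ≤ deg(R) ≤ k(ℓ−1)+1; in particular, R can be partitioned into k(ℓ−1)+1 pairwise disjoint (possibly empty) matchings M_1, …, M_{k(ℓ−1)+1} with R = ⋃_j M_j. -/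
/-- A relation `M ⊆ Π_{i∈S} Dom i` is a matching if any two of its tuples are
either equal or differ in every coordinate. -/
def IsMatching {S : Type*} {Dom : S → Type*} (M : Finset ((i : S) → Dom i)) : Prop :=
  ∀ x ∈ M, ∀ y ∈ M, x = y ∨ ∀ i : S, x i ≠ y i

/-!
Join two tuples by an edge when they are distinct and agree in some coordinate: matchings are
exactly the independent sets of this graph. A tuple of `R` has at most `ℓ - 1` neighbours in `R`
through each of the `k` coordinates, so its degree in `R` is at most `k (ℓ - 1)` and a greedy
coloring needs at most `k (ℓ - 1) + 1` colors. Conversely, tuples of `R` sharing a value in one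
coordinate lie in pairwise different matchings.
-/

open Finset

section Coloring

variable {V α : Type*} {G : SimpleGraph V}

theorem nonempty_coloring_induce_insert {s : Set V} {v : V} (C : (G.induce s).Coloring α) {q : α}
    (hq : ∀ w : s, G.Adj v w → C w ≠ q) : Nonempty ((G.induce (insert v s)).Coloring α) := by
  classical
  refine ⟨.mk (fun w ↦ if hw : (w : V) ∈ s then C ⟨w, hw⟩ else q) ?_⟩
  rintro ⟨w, hw⟩ ⟨w', hw'⟩ (hadj : G.Adj w w')
  by_cases hws : w ∈ s <;> by_cases hws' : w' ∈ s <;>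
    simp only [hws, hws', dite_true, dite_false]
  · exact C.valid (v := ⟨w, hws⟩) (w := ⟨w', hws'⟩) hadj
  · obtain rfl : w' = v := hw'.resolve_right hws'
    exact hq ⟨w, hws⟩ hadj.symm
  · obtain rfl : w = v := hw.resolve_right hws
    exact (hq ⟨w', hws'⟩ hadj).symm
  · obtain rfl : w = v := hw.resolve_right hws
    exact absurd (hw'.resolve_right hws') hadj.ne'

variable {s : Finset V}

theorem exists_color_ne_of_card_adj_lt [Fintype α] [DecidableRel G.Adj]
    (C : (G.induce (s : Set V)).Coloring α) {v : V}
    (hv : #{w ∈ s | G.Adj v w} < Fintype.card α) :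
    ∃ q, ∀ w : (s : Set V), G.Adj v w → C w ≠ q := by
  by_contra! hall
  let neighborColor (w : {w ∈ s | G.Adj v w}) : α := C ⟨w, (mem_filter.1 w.2).1⟩
  have hsurj : Function.Surjective neighborColor := fun q ↦
    let ⟨w, hadj, hw⟩ := hall q
    ⟨⟨w, mem_filter.2 ⟨w.2, hadj⟩⟩, hw⟩
  have hcard := Fintype.card_le_of_surjective neighborColor hsurj
  rw [Fintype.card_coe] at hcard
  exact hv.not_ge hcard

theorem nonempty_coloring_induce_of_card_adj_lt [Fintype α] [DecidableRel G.Adj]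
    (hs : ∀ v ∈ s, #{w ∈ s | G.Adj v w} < Fintype.card α) :
    Nonempty ((G.induce (s : Set V)).Coloring α) := by
  classical
  induction s using Finset.induction_on with
  | empty =>
    rw [coe_empty]
    exact ⟨.ofIsEmpty⟩
  | insert v s _ ih =>
    have hlt : ∀ w ∈ insert v s, #{u ∈ s | G.Adj w u} < Fintype.card α := fun w hw ↦
      (card_le_card (filter_subset_filter _ (subset_insert v s))).trans_lt (hs w hw)
    obtain ⟨C⟩ := ih fun w hw ↦ hlt w (mem_insert_of_mem hw)
    obtain ⟨q, hq⟩ := exists_color_ne_of_card_adj_lt C (hlt v (mem_insert_self v s))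
    rw [coe_insert]
    exact nonempty_coloring_induce_insert C hq

theorem exists_indepSet_partition [Fintype α] [DecidableEq V]
    (C : (G.induce (s : Set V)).Coloring α) :
    ∃ M : α → Finset V, (∀ a, G.IsIndepSet (M a)) ∧ (∀ a b, a ≠ b → Disjoint (M a) (M b)) ∧
      s = univ.biUnion M := by
  classical
  refine ⟨fun a ↦ {v ∈ s | ∃ hv : v ∈ s, C ⟨v, hv⟩ = a}, fun a v hv w hw _ hvw ↦ ?_,
    fun a b hab ↦ ?_, ?_⟩
  · obtain ⟨hvs, rfl⟩ := (mem_filter.1 hv).2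
    obtain ⟨hws, hcolor⟩ := (mem_filter.1 hw).2
    exact C.valid (v := ⟨v, hvs⟩) (w := ⟨w, hws⟩) hvw hcolor.symm
  · exact disjoint_filter.2 fun v _ ⟨_, ha⟩ ⟨_, hb⟩ ↦ hab (ha.symm.trans hb)
  · ext v
    simp

end Coloring

section Matching

variable {S : Type*} {Dom : S → Type*}

/-- The graph on tuples joining two distinct tuples that agree in some coordinate; its independent
sets are the matchings. -/
def conflictGraph (Dom : S → Type*) : SimpleGraph ((i : S) → Dom i) where
  Adj x y := x ≠ y ∧ ∃ i, x i = y i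
  symm := ⟨fun _ _ ⟨hne, i, hi⟩ ↦ ⟨hne.symm, i, hi.symm⟩⟩
  loopless := ⟨fun _ h ↦ h.1 rfl⟩

theorem isMatching_iff_isIndepSet {M : Finset ((i : S) → Dom i)} :
    IsMatching M ↔ (conflictGraph Dom).IsIndepSet M :=
  ⟨fun hM x hx y hy hne ⟨_, i, hi⟩ ↦ (hM x hx y hy).resolve_left hne i hi,
    fun hM _ hx _ hy ↦ or_iff_not_imp_left.2 fun hne i hi ↦ hM hx hy hne ⟨hne, i, hi⟩⟩

theorem card_conflictGraph_adj_le [Fintype S] [∀ i, DecidableEq (Dom i)]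
    [DecidableRel (conflictGraph Dom).Adj] {R : Finset ((i : S) → Dom i)} {x : (i : S) → Dom i}
    {ℓ : ℕ} (hx : x ∈ R) (hdeg : ∀ i, #{y ∈ R | y i = x i} ≤ ℓ) :
    #{y ∈ R | (conflictGraph Dom).Adj x y} ≤ Fintype.card S * (ℓ - 1) := by
  have hunion : {y ∈ R | (conflictGraph Dom).Adj x y} =
      univ.biUnion fun i ↦ {y ∈ R | y i = x i}.erase x := by
    ext y
    simp only [conflictGraph, mem_filter, mem_biUnion, mem_univ, mem_erase, true_and]
    grind
  rw [hunion]
  refine card_biUnion_le_card_mul _ _ _ fun i _ ↦ ?_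
  rw [card_erase_of_mem (by simp only [mem_filter, hx, and_self])]
  exact Nat.sub_le_sub_right (hdeg i) 1

theorem exists_matching_partition [Fintype S] [∀ i, DecidableEq (Dom i)]
    {R : Finset ((i : S) → Dom i)} {ℓ : ℕ} (hdeg : ∀ i v, #{x ∈ R | x i = v} ≤ ℓ) :
    ∃ M : Fin (Fintype.card S * (ℓ - 1) + 1) → Finset ((i : S) → Dom i),
      (∀ j, IsMatching (M j)) ∧ (∀ j j', j ≠ j' → Disjoint (M j) (M j')) ∧
      R = univ.biUnion M := by
  classical
  have hcolors : ∀ x ∈ R, #{y ∈ R | (conflictGraph Dom).Adj x y} <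
      Fintype.card (Fin (Fintype.card S * (ℓ - 1) + 1)) := fun x hx ↦ by
    rw [Fintype.card_fin, Nat.lt_succ_iff]
    exact card_conflictGraph_adj_le hx fun i ↦ hdeg i (x i)
  obtain ⟨C⟩ := nonempty_coloring_induce_of_card_adj_lt hcolors
  simpa only [isMatching_iff_isIndepSet] using exists_indepSet_partition C

theorem IsMatching.card_filter_apply_eq_le_one {M : Finset ((i : S) → Dom i)} (hM : IsMatching M)
    (i : S) (v : Dom i) [DecidableEq (Dom i)] : #{x ∈ M | x i = v} ≤ 1 := by
  refine card_le_one.2 fun x hx y hy ↦ ?_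
  rw [mem_filter] at hx hy
  exact (hM x hx.1 y hy.1).resolve_right fun hne ↦ hne i (hx.2.trans hy.2.symm)

theorem card_filter_apply_eq_le_of_matching_cover {ι : Type*} [Fintype ι]
    [DecidableEq ((i : S) → Dom i)] {R : Finset ((i : S) → Dom i)}
    {M : ι → Finset ((i : S) → Dom i)} (hM : ∀ j, IsMatching (M j)) (hR : R ⊆ univ.biUnion M)
    (i : S) (v : Dom i) [DecidableEq (Dom i)] : #{x ∈ R | x i = v} ≤ Fintype.card ι :=
  calc #{x ∈ R | x i = v}
    _ ≤ #{x ∈ univ.biUnion M | x i = v} := card_le_card (filter_subset_filter _ hR)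
    _ = #(univ.biUnion fun j ↦ {x ∈ M j | x i = v}) := by rw [filter_biUnion]
    _ ≤ #(univ : Finset ι) * 1 :=
      card_biUnion_le_card_mul _ _ _ fun j _ ↦ (hM j).card_filter_apply_eq_le_one i v
    _ = Fintype.card ι := by rw [mul_one, card_univ]

end Matching

theorem max_degree_le_matching_degree_le_general
    {S : Type*} [Fintype S] {Dom : S → Type*} [∀ i, DecidableEq (Dom i)]
    (R : Finset ((i : S) → Dom i)) (ℓ : ℕ)
    (hub : ∀ (i : S) (v : Dom i), #{x ∈ R | x i = v} ≤ ℓ)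
    (hattain : ∃ (i : S) (v : Dom i), #{x ∈ R | x i = v} = ℓ) :
    (∃ M : Fin (Fintype.card S * (ℓ - 1) + 1) → Finset ((i : S) → Dom i),
        (∀ j, IsMatching (M j)) ∧
        (∀ j j', j ≠ j' → Disjoint (M j) (M j')) ∧
        R = univ.biUnion M) ∧
    (∀ (d : ℕ) (M : Fin d → Finset ((i : S) → Dom i)),
        (∀ j, IsMatching (M j)) → R ⊆ univ.biUnion M → ℓ ≤ d) := by
  refine ⟨exists_matching_partition hub, fun d M hM hR ↦ ?_⟩
  obtain ⟨i, v, rfl⟩ := hattain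
  simpa only [Fintype.card_fin] using card_filter_apply_eq_le_of_matching_cover hM hR i v

/-- Let `|S| = k ≥ 1`, `R ⊆ Π_{i∈S} Dom i`, and let `ℓ` be the maximum degree of `R`
(the maximum, over coordinates `i` and values `v`, of the number of tuples `x ∈ R`
with `x i = v`).  Then `R` can be partitioned into `k(ℓ−1)+1` pairwise disjoint
(possibly empty) matchings, and moreover every partition of `R` into `d` pairwise
disjoint matchings has `d ≥ ℓ`; that is, `ℓ ≤ deg(R) ≤ k(ℓ−1)+1`. -/
theorem max_degree_le_matching_degree_le
    {S : Type*} [Fintype S] [DecidableEq S] {Dom : S → Type*}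
    [∀ i, Fintype (Dom i)] [∀ i, DecidableEq (Dom i)]
    (k : ℕ) (hk : Fintype.card S = k) (hk1 : 1 ≤ k)
    (R : Finset ((i : S) → Dom i)) (ℓ : ℕ)
    (hub : ∀ (i : S) (v : Dom i), (R.filter (fun x => x i = v)).card ≤ ℓ)
    (hattain : ∃ (i : S) (v : Dom i), (R.filter (fun x => x i = v)).card = ℓ) :
    (∃ M : Fin (k * (ℓ - 1) + 1) → Finset ((i : S) → Dom i),
        (∀ j, IsMatching (M j)) ∧
        (∀ j j', j ≠ j' → Disjoint (M j) (M j')) ∧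
        R = Finset.univ.biUnion M) ∧
    (∀ (d : ℕ) (M : Fin d → Finset ((i : S) → Dom i)),
        (∀ j, IsMatching (M j)) →
        (∀ j j', j ≠ j' → Disjoint (M j) (M j')) →
        R = Finset.univ.biUnion M → ℓ ≤ d) := by
  subst hk
  exact (max_degree_le_matching_degree_le_general R ℓ hub hattain).imp_right
    fun hlower d M hM _ hR ↦ hlower d M hM hR.le
end

section
/- Let Σ be a finite alphabet, let k ≥ 2 and n ≥ 1 be integers, and let w_1, …, w_m ∈ Σ^n (m ≤ k) be pairwise distinct words such that the Hamming distance between any two of them is at least (1 − 2/k²)·n. Then there exists a position i ∈ [n] at which the symbols w_1(i), …, w_m(i) are pairwise distinct. -/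
/-!
A position is bad if two of the words agree there. Each pair of words agrees in at most
`(2 / k²) n` positions, and there are at most `k (k - 1) / 2` pairs, so the union bound leaves at
least `n - (1 - 1 / k) n = n / k > 0` good positions.
-/

open Finset Function

theorem not_injective_iff_exists_isDiag_map {α β : Type*} {f : α → β} :
    ¬ Injective f ↔ ∃ e : Sym2 α, ¬ e.IsDiag ∧ (e.map f).IsDiag := by
  simp [Injective, Sym2.exists, and_comm]

theorem choose_two_mul_two_div_sq_lt_one {m : ℕ} {k : ℝ} (hm : m ≤ k) :
    (m.choose 2 : ℝ) * (2 / k ^ 2) < 1 := by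
  rcases m.eq_zero_or_pos with rfl | hm_pos
  · simp
  have hm_pos' : (0 : ℝ) < m := mod_cast hm_pos
  have hk_pos : 0 < k := hm_pos'.trans_le hm
  calc (m.choose 2 : ℝ) * (2 / k ^ 2) = m * (m - 1) / k ^ 2 := by
        rw [Nat.cast_choose_two]; ring
    _ < 1 := by
        rw [div_lt_one (by positivity)]
        nlinarith

section Words

variable {ι κ : Type*} {β : ι → Type*} [Fintype ι] [∀ i, DecidableEq (β i)]

theorem card_filter_eq_add_hammingDist (x y : ∀ i, β i) :
    #{i | x i = y i} + hammingDist x y = Fintype.card ι :=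
  card_filter_add_card_filter_not _

variable [Fintype κ]

theorem card_filter_not_injective_le {w : κ → ∀ i, β i} {d : ℝ}
    (hd : ∀ a b, a ≠ b → (#{i | w a i = w b i} : ℝ) ≤ d) :
    (#{i | ¬ Injective (w · i)} : ℝ) ≤ (Fintype.card κ).choose 2 * d := by
  classical
  let agreement (e : Sym2 κ) : Finset ι := {i | (e.map (w · i)).IsDiag}
  have hcover : ({i | ¬ Injective (w · i)} : Finset ι) ⊆
      univ.biUnion fun e : {e : Sym2 κ // ¬ e.IsDiag} ↦ agreement e := by
    intro i
    simp [agreement, not_injective_iff_exists_isDiag_map]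
  have hagreement (e : {e : Sym2 κ // ¬ e.IsDiag}) : (#(agreement e) : ℝ) ≤ d := by
    obtain ⟨⟨a, b⟩, hab⟩ := e
    simpa [agreement] using hd a b hab
  calc (#{i | ¬ Injective (w · i)} : ℝ)
      ≤ ∑ e : {e : Sym2 κ // ¬ e.IsDiag}, (#(agreement e) : ℝ) :=
        mod_cast (card_le_card hcover).trans card_biUnion_le
    _ ≤ Fintype.card {e : Sym2 κ // ¬ e.IsDiag} • d :=
        sum_le_card_nsmul _ _ _ fun e _ ↦ hagreement e
    _ = (Fintype.card κ).choose 2 * d := by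
        rw [Sym2.card_subtype_not_diag, nsmul_eq_mul]

theorem exists_injective_of_choose_two_mul_lt {w : κ → ∀ i, β i} {d : ℝ}
    (hdist : ∀ a b, a ≠ b → Fintype.card ι - d ≤ hammingDist (w a) (w b))
    (hd : (Fintype.card κ).choose 2 * d < Fintype.card ι) :
    ∃ i, Injective (w · i) := by
  classical
  have hagree (a b : κ) (hab : a ≠ b) : (#{i | w a i = w b i} : ℝ) ≤ d := by
    have hcard : (#{i | w a i = w b i} : ℝ) + hammingDist (w a) (w b) = Fintype.card ι :=
      mod_cast card_filter_eq_add_hammingDist (w a) (w b)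
    linarith [hdist a b hab]
  have hbad : #{i | ¬ Injective (w · i)} < #(univ : Finset ι) :=
    mod_cast (card_filter_not_injective_le hagree).trans_lt hd
  obtain ⟨i, -, hi⟩ := exists_mem_notMem_of_card_lt_card hbad
  exact ⟨i, by simpa using hi⟩

theorem exists_position_pairwise_distinct_general [Nonempty ι] {k : ℝ}
    (hk : Fintype.card κ ≤ k) (w : κ → ∀ i, β i)
    (hdist : ∀ a b, a ≠ b → (1 - 2 / k ^ 2) * Fintype.card ι ≤ hammingDist (w a) (w b)) :
    ∃ i, Injective (w · i) := by
  have hn : (0 : ℝ) < Fintype.card ι := mod_cast Fintype.card_pos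
  refine exists_injective_of_choose_two_mul_lt (d := 2 / k ^ 2 * Fintype.card ι)
    (fun a b hab ↦ by linarith [hdist a b hab]) ?_
  rw [← mul_assoc]
  exact mul_lt_of_lt_one_left hn (choose_two_mul_two_div_sq_lt_one hk)

end Words

/-- If `m ≤ k` pairwise distinct words of length `n` over a finite alphabet have
pairwise Hamming distance at least `(1 − 2/k²)·n`, then there is a position at which
all of them carry pairwise distinct symbols. -/
theorem exists_position_pairwise_distinct
    {σ : Type*} [Fintype σ] [DecidableEq σ]
    (k n m : ℕ) (hk : 2 ≤ k) (hn : 1 ≤ n) (hm : m ≤ k)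
    (w : Fin m → (Fin n → σ))
    (hdistinct : Function.Injective w)
    (hdist : ∀ a b : Fin m, a ≠ b →
      ((1 : ℝ) - 2 / (k : ℝ) ^ 2) * (n : ℝ) ≤ (hammingDist (w a) (w b) : ℝ)) :
    ∃ i : Fin n, ∀ a b : Fin m, a ≠ b → w a i ≠ w b i := by
  have : NeZero n := ⟨by lia⟩
  obtain ⟨i, hi⟩ := exists_position_pairwise_distinct_general (k := k) (by simpa) w (by simpa)
  exact ⟨i, fun _ _ ↦ hi.ne⟩
end

section
/- Let G = (U, A) be a multi-hypergraph with |U| = k, let N, q, c, n be positive integers, and let w_1, …, w_N ∈ [q]^n be words such that for every set of at most k of them there exists a position i ∈ [n] at which they are pairwise distinct. Suppose F̄ is a family of functions f̄ : [q] → [c] satisfying the coloring condition for G with domain size q. Define F = { j ↦ f̄(w_j(i)) : i ∈ [n], f̄ ∈ F̄ }, a family of functions [N] → [c] of size at most n·|F̄|. Then F satisfies the coloring condition for G with domain size N. -/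
/-- A proper coloring of the multi-hypergraph `(U, A)`: every edge `S ∈ A` contains
two distinct vertices receiving different colors. -/
def ProperColoring {U κ : Type*} (A : Multiset (Finset U)) (h : U → κ) : Prop :=
  ∀ S ∈ A, ∃ u ∈ S, ∃ v ∈ S, u ≠ v ∧ h u ≠ h v

open Cardinal Set

universe u u₁ u₂ u₃ u₄

/-- The coloring condition for the multi-hypergraph with edges `A`, for a family `F` of functions
`σ → κ`: every proper `σ`-coloring is turned into a proper `κ`-coloring by some member of `F`. -/
def ColoringCondition {U σ κ : Type*} (A : Multiset (Finset U)) (F : Set (σ → κ)) : Prop :=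
  ∀ h : U → σ, ProperColoring A h → ∃ f ∈ F, ProperColoring A (f ∘ h)

/-- A code whose words are indexed by `σ`, with positions `ι` and alphabet `α`, is a perfect hash
code of strength `k` if any at most `k` of its words are pairwise distinct at a common position.
The strength is a cardinal so that colorings of infinite vertex sets are covered. -/
def IsPerfectHashCode {σ : Type u₁} {ι α : Type*} (w : σ → ι → α) (k : Cardinal.{u₁}) : Prop :=
  ∀ T : Set σ, #T ≤ k → ∃ i, InjOn (fun j => w j i) T

/-- The concatenation of a code `w` with a family `F` of functions on its alphabet: read a word at
some position, then apply a member of `F`. -/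
def concatenation {σ ι α κ : Type*} (w : σ → ι → α) (F : Set (α → κ)) : Set (σ → κ) :=
  image2 (fun i f j => f (w j i)) univ F

theorem ProperColoring.comp_of_injOn_range {U σ α : Type*} {A : Multiset (Finset U)} {h : U → σ}
    {g : σ → α} (hh : ProperColoring A h) (hg : InjOn g (range h)) : ProperColoring A (g ∘ h) := by
  intro S hS
  obtain ⟨x, hx, y, hy, hxy, hne⟩ := hh S hS
  exact ⟨x, hx, y, hy, hxy, hg.ne (mem_range_self x) (mem_range_self y) hne⟩

theorem isPerfectHashCode_natCast_iff {σ ι α : Type*} {w : σ → ι → α} {k : ℕ} :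
    IsPerfectHashCode w k ↔
      ∀ T : Finset σ, T.card ≤ k → ∃ i, InjOn (fun j => w j i) (T : Set σ) := by
  refine ⟨fun hw T hT => hw T (by simpa using hT), fun hw T hT => ?_⟩
  have hfin : T.Finite := lt_aleph0_iff_set_finite.1 (hT.trans_lt natCast_lt_aleph0)
  lift T to Finset σ using hfin
  exact hw T (by simpa using hT)

theorem IsPerfectHashCode.exists_properColoring {U : Type u} {σ : Type u₁} {ι α : Type*}
    {w : σ → ι → α} {k : Cardinal.{u₁}} {A : Multiset (Finset U)} {h : U → σ}
    (hw : IsPerfectHashCode w k) (hU : lift.{u₁} #U ≤ lift.{u} k) (hh : ProperColoring A h) :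
    ∃ i, ProperColoring A (fun x => w (h x) i) := by
  have hrange : #(range h) ≤ k := lift_le.1 (mk_range_le_lift.trans hU)
  obtain ⟨i, hi⟩ := hw (range h) hrange
  exact ⟨i, hh.comp_of_injOn_range hi⟩

theorem ColoringCondition.concatenation {U : Type u} {σ : Type u₁} {ι α κ : Type*}
    {w : σ → ι → α} {k : Cardinal.{u₁}} {A : Multiset (Finset U)} {F : Set (α → κ)}
    (hF : ColoringCondition A F) (hw : IsPerfectHashCode w k) (hU : lift.{u₁} #U ≤ lift.{u} k) :
    ColoringCondition A (concatenation w F) := by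
  intro h hh
  obtain ⟨i, hi⟩ := hw.exists_properColoring hU hh
  obtain ⟨f, hf, hfi⟩ := hF _ hi
  exact ⟨fun j => f (w j i), mem_image2_of_mem (mem_univ i) hf, hfi⟩

theorem lift_mk_concatenation_le {σ : Type u₁} {ι : Type u₂} {α : Type u₃} {κ : Type u₄}
    (w : σ → ι → α) (F : Set (α → κ)) :
    lift.{max u₂ u₃ u₄} #(concatenation w F) ≤ lift.{max u₁ u₄} #(ι × F) := by
  have hrange : concatenation w F = range fun x : ι × F => fun j => x.2.1 (w j x.1) := by
    ext g
    simp [concatenation]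
  rw [hrange]
  exact mk_range_le_lift

theorem coe_image_product_eq_concatenation {σ ι α κ : Type*} [Fintype ι] [DecidableEq (σ → κ)]
    (w : σ → ι → α) (F : Finset (α → κ)) :
    ((Finset.univ ×ˢ F).image fun x : ι × (α → κ) => fun j => x.2 (w j x.1) : Set (σ → κ)) =
      concatenation w F := by
  simp only [concatenation, Finset.coe_image, Finset.coe_product, Finset.coe_univ]
  exact image_prod fun i (f : α → κ) j => f (w j i)

theorem code_concatenation_coloring_condition_general {U : Type u} {σ : Type u₁} {ι : Type u₂}
    {α : Type u₃} {κ : Type u₄} (A : Multiset (Finset U)) (k : Cardinal.{u₁})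
    (hk : lift.{u₁} #U ≤ lift.{u} k) (w : σ → ι → α) (hw : IsPerfectHashCode w k)
    (F : Set (α → κ)) (hF : ColoringCondition A F) :
    lift.{max u₂ u₃ u₄} #(concatenation w F) ≤ lift.{max u₁ u₄} #(ι × F) ∧
      ColoringCondition A (concatenation w F) :=
  ⟨lift_mk_concatenation_le w F, hF.concatenation hw hk⟩

/-- Code concatenation: if the words `w_1, …, w_N ∈ [q]^n` are such that any ≤ `k`
of them are pairwise distinguished at some position, and `F̄` is a family of
functions `[q] → [c]` satisfying the coloring condition for `(U, A)` (`|U| = k`)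
with domain size `q`, then the family
`F = { j ↦ f̄ (w j i) : i ∈ [n], f̄ ∈ F̄ }`, of size at most `n·|F̄|`,
satisfies the coloring condition for `(U, A)` with domain size `N`. -/
theorem code_concatenation_coloring_condition
    {U : Type*} [Fintype U] (A : Multiset (Finset U)) (hA : ∀ S ∈ A, 2 ≤ S.card)
    (k : ℕ) (hk : Fintype.card U = k)
    (N q c n : ℕ) (hN : 0 < N) (hq : 0 < q) (hc : 0 < c) (hn : 0 < n)
    (w : Fin N → Fin n → Fin q)
    (hw : ∀ T : Finset (Fin N), T.card ≤ k →
      ∃ i : Fin n, Set.InjOn (fun j => w j i) (T : Set (Fin N)))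
    (Fbar : Finset (Fin q → Fin c))
    (hFbar : ∀ h : U → Fin q, ProperColoring A h →
      ∃ f ∈ Fbar, ProperColoring A (f ∘ h)) :
    ((Finset.univ ×ˢ Fbar).image
        (fun x : Fin n × (Fin q → Fin c) => fun j : Fin N => x.2 (w j x.1))).card ≤
      n * Fbar.card ∧
    ∀ h : U → Fin N, ProperColoring A h →
      ∃ f ∈ (Finset.univ ×ˢ Fbar).image
          (fun x : Fin n × (Fin q → Fin c) => fun j : Fin N => x.2 (w j x.1)),
        ProperColoring A (f ∘ h) := by
  have hmain := code_concatenation_coloring_condition_general A k (by simp [hk]) w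
    (isPerfectHashCode_natCast_iff.2 hw) (Fbar : Set (Fin q → Fin c)) hFbar
  rw [← coe_image_product_eq_concatenation] at hmain
  refine ⟨?_, hmain.2⟩
  simpa only [Finset.coe_sort_coe, mk_prod, mk_coe_finset, mk_fin, lift_natCast, ← Nat.cast_mul,
    Nat.cast_le] using hmain.1
end

section
/- Let G = (U, A) be a multi-hypergraph, let N, c be positive integers, let p = (p_1,…,p_c) be a probability vector with θ(p) > 0, and let D^P be the product distribution on functions [N] → [c] in which each value f(x) independently equals i with probability p_i. Suppose S is a finite nonempty multiset of functions [N] → [c] that is a (|U|, δ)-approximation of D^P with δ = θ(p)/(2·c^{|U|}). Then for every proper N-coloring h of G, the fraction of functions f ∈ S for which f ∘ h is a proper c-coloring of G is at least θ(p)/2. -/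
open Classical

/-- For an `N`-coloring `h` of the multi-hypergraph `(U, A)`, the sum over all proper
`c`-colorings `g` of the homomorphic image `h(G)` (a map on the image `h(U) ⊆ [N]`
giving two differently-colored distinct vertices in every image edge `h(S)`)
of `∏_{v ∈ h(U)} p_{g v}`. -/
noncomputable def imageColoringSum {U : Type*} [Fintype U] (A : Multiset (Finset U))
    {N c : ℕ} (p : Fin c → ℝ) (h : U → Fin N) : ℝ :=
  ∑ g : {v : Fin N // v ∈ Finset.image h Finset.univ} → Fin c,
    if ∀ S ∈ A, ∃ u ∈ S, ∃ v ∈ S,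
        g ⟨h u, Finset.mem_image_of_mem h (Finset.mem_univ u)⟩ ≠
        g ⟨h v, Finset.mem_image_of_mem h (Finset.mem_univ v)⟩
    then ∏ v : {v : Fin N // v ∈ Finset.image h Finset.univ}, p (g v)
    else 0

/-- `θ(p)`: the minimum, over proper `N`-colorings `h` of `(U, A)`, of the sum over
proper `c`-colorings `g` of the homomorphic image `h(G)` of `∏_{v ∈ h(U)} p_{g v}`. -/
noncomputable def theta {U : Type*} [Fintype U] (A : Multiset (Finset U))
    (N : ℕ) {c : ℕ} (p : Fin c → ℝ) : ℝ :=
  sInf {t : ℝ | ∃ h : U → Fin N, ProperColoring A h ∧ imageColoringSum A p h = t}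

/-- `P(G, c)`: the number of proper `c`-colorings of the multi-hypergraph `(U, A)`. -/
noncomputable def numProperColorings (U : Type*) [Fintype U] (A : Multiset (Finset U))
    (c : ℕ) : ℕ :=
  Fintype.card {h : U → Fin c // ProperColoring A h}

/-!
Whether `f ∘ h` is proper depends only on the restriction of `f` to `h(U)`, and a restriction
qualifies exactly when it is a proper coloring of `h(G)`. Under the product distribution this event
has probability `imageColoringSum A p h ≥ θ(p)`. Replacing that distribution by `S` costs at most
`δ` for each qualifying restriction, and `g ↦ g ∘ h` embeds these restrictions into the proper
`c`-colorings of `G`, so the total error is at most `P(G, c) δ ≤ c ^ |U| δ = θ(p) / 2`.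
-/

/-- The multiset `S` of functions `V → κ` is a `(k, δ)`-approximation of the product distribution
on `V → κ` with weights `p`. The weights may be arbitrary reals, and a partial assignment
on `I` is encoded by a total function `v`, of which only the values on `I` matter. -/
def IsProductApprox {V κ : Type*} [DecidableEq κ] (S : Multiset (V → κ)) (p : κ → ℝ) (k : ℕ)
    (δ : ℝ) : Prop :=
  ∀ I : Finset V, I.card ≤ k → ∀ v : V → κ,
    |((S.countP (fun f => ∀ x ∈ I, f x = v x) : ℝ) / (Multiset.card S : ℝ)) -
      ∏ x ∈ I, p (v x)| < δ

theorem countP_comp_eq_sum_countP_eq {α β : Type*} [Fintype β] [DecidableEq β] (r : α → β)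
    (Q : β → Prop) [DecidablePred Q] (S : Multiset α) :
    S.countP (fun a => Q (r a)) = ∑ b with Q b, S.countP (fun a => r a = b) := by
  have hsupport : ∀ b ∈ (S.map r).filter Q, b ∈ Finset.univ.filter Q := fun b hb =>
    Finset.mem_filter.2 ⟨Finset.mem_univ b, Multiset.of_mem_filter hb⟩
  calc S.countP (fun a => Q (r a))
      = Multiset.card ((S.map r).filter Q) := by
        rw [← Multiset.countP_eq_card_filter, Multiset.countP_map, Multiset.countP_eq_card_filter]
    _ = ∑ b with Q b, ((S.map r).filter Q).count b :=
        (Multiset.sum_count_eq_card hsupport).symm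
    _ = ∑ b with Q b, S.countP (fun a => r a = b) := by
        refine Finset.sum_congr rfl fun b hb => ?_
        rw [Multiset.count_filter_of_pos (Finset.mem_filter.1 hb).2, Multiset.count_map,
          Multiset.countP_eq_card_filter]
        simp only [eq_comm]

namespace IsProductApprox

variable {V κ : Type*} [DecidableEq κ] {S : Multiset (V → κ)} {p : κ → ℝ} {k : ℕ} {δ : ℝ}

theorem pos (hS : IsProductApprox S p k δ) (v : V → κ) : 0 < δ :=
  (abs_nonneg _).trans_lt (hS ∅ (Nat.zero_le k) v)

theorem abs_countP_restrict_eq_div_card_sub_prod_lt (hS : IsProductApprox S p k δ) (hS0 : S ≠ 0)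
    {I : Finset V} (hI : I.card ≤ k) (g : I → κ) :
    |(S.countP (fun f => I.restrict f = g) : ℝ) / Multiset.card S - ∏ x, p (g x)| < δ := by
  obtain ⟨f₀, -⟩ := Multiset.exists_mem_of_ne_zero hS0
  obtain ⟨v, rfl⟩ : ∃ v : V → κ, I.restrict v = g :=
    ⟨Function.extend Subtype.val g f₀, funext (Subtype.val_injective.extend_apply g f₀)⟩
  have hprod : ∏ x, p (I.restrict v x) = ∏ x ∈ I, p (v x) := Finset.prod_coe_sort I (p ∘ v)
  rw [hprod]
  simpa only [funext_iff, Subtype.forall, Finset.restrict] using hS I hI v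

theorem abs_countP_restrict_div_card_sub_sum_le [DecidableEq V] [Fintype κ]
    (hS : IsProductApprox S p k δ) (hS0 : S ≠ 0) {I : Finset V} (hI : I.card ≤ k)
    (Q : (I → κ) → Prop) [DecidablePred Q] :
    |(S.countP (fun f => Q (I.restrict f)) : ℝ) / Multiset.card S -
        ∑ g with Q g, ∏ x, p (g x)| ≤ (Finset.univ.filter Q).card * δ := by
  rw [countP_comp_eq_sum_countP_eq I.restrict Q S, Nat.cast_sum, Finset.sum_div,
    ← Finset.sum_sub_distrib, ← nsmul_eq_mul]
  exact (Finset.abs_sum_le_sum_abs _ _).trans <| Finset.sum_le_card_nsmul _ _ _ fun g _ =>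
    (hS.abs_countP_restrict_eq_div_card_sub_prod_lt hS0 hI g).le

end IsProductApprox

theorem properColoring_iff {U κ : Type*} {A : Multiset (Finset U)} {h : U → κ} :
    ProperColoring A h ↔ ∀ S ∈ A, ∃ u ∈ S, ∃ v ∈ S, h u ≠ h v := by
  refine forall₂_congr fun S _ => ⟨?_, ?_⟩
  · rintro ⟨u, hu, v, hv, -, hne⟩
    exact ⟨u, hu, v, hv, hne⟩
  · rintro ⟨u, hu, v, hv, hne⟩
    exact ⟨u, hu, v, hv, ne_of_apply_ne h hne, hne⟩

section ImageColoring

variable {U : Type*} [Fintype U]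

/-- The coloring `h`, regarded as a map onto the vertex set `h(U)` of the homomorphic image;
a coloring `g` of `h(G)` is proper exactly when the coloring `g ∘ toImage h` of `G` is. -/
def toImage {V : Type*} [DecidableEq V] (h : U → V) (u : U) : Finset.univ.image h :=
  ⟨h u, Finset.mem_image_of_mem h (Finset.mem_univ u)⟩

theorem toImage_surjective {V : Type*} [DecidableEq V] (h : U → V) :
    Function.Surjective (toImage h) := by
  rintro ⟨x, hx⟩
  obtain ⟨u, -, rfl⟩ := Finset.mem_image.1 hx
  exact ⟨u, rfl⟩

variable (A : Multiset (Finset U)) {N c : ℕ}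

theorem imageColoringSum_eq_sum_properColoring (p : Fin c → ℝ) (h : U → Fin N) :
    imageColoringSum A p h = ∑ g with ProperColoring A (g ∘ toImage h), ∏ v, p (g v) := by
  simp only [imageColoringSum, Finset.sum_filter, properColoring_iff, Function.comp_apply, toImage]

theorem theta_le_imageColoringSum (p : Fin c → ℝ) {h : U → Fin N} (hh : ProperColoring A h) :
    theta A N p ≤ imageColoringSum A p h :=
  csInf_le (((Set.toFinite {h' : U → Fin N | ProperColoring A h'}).image _).bddBelow)
    ⟨h, hh, rfl⟩

theorem card_properColoring_image_le {V : Type*} [DecidableEq V] (c : ℕ) (h : U → V) :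
    (Finset.univ.filter fun g : Finset.univ.image h → Fin c =>
      ProperColoring A (g ∘ toImage h)).card ≤ numProperColorings U A c := by
  rw [numProperColorings, Fintype.card_subtype]
  refine Finset.card_le_card_of_injOn (· ∘ toImage h) (fun g hg => ?_)
    (toImage_surjective h).injective_comp_right.injOn
  simpa using hg

theorem numProperColorings_le_pow (c : ℕ) : numProperColorings U A c ≤ c ^ Fintype.card U := by
  simpa [numProperColorings] using Fintype.card_subtype_le fun h : U → Fin c => ProperColoring A h

theorem numProperColorings_mul_div_two_mul_pow_le (c : ℕ) {t : ℝ} (ht : 0 ≤ t) :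
    numProperColorings U A c * (t / (2 * (c : ℝ) ^ Fintype.card U)) ≤ t / 2 := by
  have hle : (numProperColorings U A c : ℝ) ≤ (c : ℝ) ^ Fintype.card U :=
    mod_cast numProperColorings_le_pow A c
  calc numProperColorings U A c * (t / (2 * (c : ℝ) ^ Fintype.card U))
      = numProperColorings U A c / (c : ℝ) ^ Fintype.card U * (t / 2) := by ring
    _ ≤ t / 2 := mul_le_of_le_one_left (by positivity) (div_le_one_of_le₀ hle (by positivity))

theorem abs_properColoring_fraction_sub_imageColoringSum_le {p : Fin c → ℝ} {δ : ℝ}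
    {S : Multiset (Fin N → Fin c)} (hS : IsProductApprox S p (Fintype.card U) δ) (hS0 : S ≠ 0)
    (h : U → Fin N) :
    |(S.countP (fun f => ProperColoring A (f ∘ h)) : ℝ) / Multiset.card S -
        imageColoringSum A p h| ≤ numProperColorings U A c * δ := by
  obtain ⟨f₀, -⟩ := Multiset.exists_mem_of_ne_zero hS0
  rw [imageColoringSum_eq_sum_properColoring]
  refine (hS.abs_countP_restrict_div_card_sub_sum_le hS0 Finset.card_image_le
    fun g => ProperColoring A (g ∘ toImage h)).trans ?_
  exact mul_le_mul_of_nonneg_right (mod_cast card_properColoring_image_le A c h) (hS.pos f₀).le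

end ImageColoring

theorem approx_distribution_coloring_fraction_general {U : Type*} [Fintype U]
    (A : Multiset (Finset U)) {N c : ℕ} {p : Fin c → ℝ} {δ : ℝ} {S : Multiset (Fin N → Fin c)}
    (hS : IsProductApprox S p (Fintype.card U) δ) (hS0 : S ≠ 0) {h : U → Fin N}
    (hh : ProperColoring A h) :
    theta A N p - numProperColorings U A c * δ ≤
      (S.countP (fun f => ProperColoring A (f ∘ h)) : ℝ) / Multiset.card S := by
  have hfraction := abs_le.1 (abs_properColoring_fraction_sub_imageColoringSum_le A hS hS0 h)
  linarith [theta_le_imageColoringSum A p hh]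

/-- Derandomization via approximate distributions: if the multiset `S` of functions
`[N] → [c]` is a `(|U|, δ)`-approximation of the product distribution `D^P` given by
the probability vector `p` (each coordinate independently equal to `i` with
probability `p i`), where `δ = θ(p)/(2·c^{|U|})`, then for every proper `N`-coloring
`h` of `(U, A)`, the fraction of `f ∈ S` for which `f ∘ h` is a proper `c`-coloring
of `(U, A)` is at least `θ(p)/2`. -/
theorem approx_distribution_coloring_fraction
    {U : Type*} [Fintype U] (A : Multiset (Finset U)) (hA : ∀ S ∈ A, 2 ≤ S.card)
    (N c : ℕ) (hN : 0 < N) (hc : 0 < c)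
    (p : Fin c → ℝ) (hp0 : ∀ i, 0 ≤ p i) (hp1 : ∑ i, p i = 1)
    (hθ : 0 < theta A N p)
    (S : Multiset (Fin N → Fin c)) (hS : S ≠ 0)
    (happrox : ∀ I : Finset (Fin N), I.card ≤ Fintype.card U →
      ∀ v : Fin N → Fin c,
        |((S.countP (fun f => ∀ x ∈ I, f x = v x) : ℝ) / (Multiset.card S : ℝ)) -
            ∏ x ∈ I, p (v x)| <
          theta A N p / (2 * (c : ℝ) ^ Fintype.card U)) :
    ∀ h : U → Fin N, ProperColoring A h →
      theta A N p / 2 ≤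
        (S.countP (fun f => ProperColoring A (f ∘ h)) : ℝ) / (Multiset.card S : ℝ) := by
  intro h hh
  -- The two sides decide the event `∀ x ∈ I, f x = v x` by different instances.
  have hSapprox : IsProductApprox S p (Fintype.card U)
      (theta A N p / (2 * (c : ℝ) ^ Fintype.card U)) := fun I hI v => by
    convert happrox I hI v
  linarith [approx_distribution_coloring_fraction_general A hSapprox hS hh,
    numProperColorings_mul_div_two_mul_pow_le A c hθ.le]
end

section
/- Let H = (V, E) be a hypergraph with V = [n], let F ⊆ V, and suppose some vertex of V belongs to at least one hyperedge of E. Let n' > n and let H' = ([n'], E') where E' = E ∪ { S_j : j ∈ [n']∖[n] } and each S_j = {i_j, j} for some i_j ∈ [n]. Then fhtw_F(H') ≤ fhtw_F(H) and subw_F(H') ≤ subw_F(H), where fhtw_F(H) = min over F-connex tree decompositions (T, χ) of H of (sup over edge-dominated polymatroids h on the vertex set of max over nodes t of h(χ(t))), and subw_F(H) = sup over edge-dominated polymatroids h of (min over F-connex tree decompositions (T, χ) of max over nodes t of h(χ(t))). -/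
open scoped ENNReal

/-- A tree decomposition of the hypergraph with edge set `E` on vertex set `V`:
a finite tree `T` together with a bag `χ(t) ⊆ V` for every node `t`, such that every
hyperedge is contained in some bag and, for every vertex `v`, the nodes whose bags
contain `v` induce a nonempty connected subtree. -/
structure TreeDecomp {V : Type*} (E : Finset (Finset V)) where
  ι : Type
  fin : Fintype ι
  T : SimpleGraph ι
  isTree : T.IsTree
  bag : ι → Finset V
  covers : ∀ S ∈ E, ∃ t : ι, S ⊆ bag t
  rip : ∀ v : V, (T.induce {t : ι | v ∈ bag t}).Connected

/-- A tree decomposition is `F`-connex if some set of nodes inducing a (nonempty)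
connected subtree has bags whose union is exactly `F`. -/
def TreeDecomp.FConnex {V : Type*} {E : Finset (Finset V)} (D : TreeDecomp E)
    (F : Finset V) : Prop :=
  ∃ V' : Set D.ι, (D.T.induce V').Connected ∧
    ∀ v : V, (v ∈ F ↔ ∃ t ∈ V', v ∈ D.bag t)

/-- A polymatroid: a nonnegative set function vanishing on `∅` that is monotone and
submodular. -/
def IsPolymatroid {V : Type*} [DecidableEq V] (h : Finset V → NNReal) : Prop :=
  h ∅ = 0 ∧ (∀ X Y : Finset V, X ⊆ Y → h X ≤ h Y) ∧
    ∀ X Y : Finset V, h (X ∪ Y) + h (X ∩ Y) ≤ h X + h Y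

/-- Edge-dominated: `h S ≤ 1` for every hyperedge `S ∈ E`. -/
def EdgeDominated {V : Type*} (E : Finset (Finset V)) (h : Finset V → NNReal) : Prop :=
  ∀ S ∈ E, h S ≤ 1

/-- The width of a tree decomposition with respect to a set function `h`:
the maximum of `h` over the bags. -/
noncomputable def TreeDecomp.width {V : Type*} {E : Finset (Finset V)}
    (D : TreeDecomp E) (h : Finset V → NNReal) : ℝ≥0∞ :=
  ⨆ t : D.ι, (h (D.bag t) : ℝ≥0∞)

/-- The submodular width `subw_F`: the sup over edge-dominated polymatroids of the
inf over `F`-connex tree decompositions of the max of `h` over the bags. -/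
noncomputable def subwF {V : Type*} [DecidableEq V] (E : Finset (Finset V))
    (F : Finset V) : ℝ≥0∞ :=
  ⨆ h : {h : Finset V → NNReal // IsPolymatroid h ∧ EdgeDominated E h},
    ⨅ D : {D : TreeDecomp E // D.FConnex F}, D.1.width h.1

/-- The fractional hypertree width `fhtw_F`: the inf over `F`-connex tree
decompositions of the sup over edge-dominated polymatroids of the max of `h` over
the bags. -/
noncomputable def fhtwF {V : Type*} [DecidableEq V] (E : Finset (Finset V))
    (F : Finset V) : ℝ≥0∞ :=
  ⨅ D : {D : TreeDecomp E // D.FConnex F},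
    ⨆ h : {h : Finset V → NNReal // IsPolymatroid h ∧ EdgeDominated E h},
      D.1.width h.1

/-!
Hang a leaf with bag `{i_j, j}` for each fresh vertex `j` on a node of the given tree decomposition
whose bag contains `i_j`. The old nodes and bags are unchanged, so the subtree witnessing
`F`-connexity survives. Each new bag is a hyperedge, so an edge-dominated polymatroid `h` has width
at most `max (w, 1)` on the new decomposition, where `w` is the width of the restriction of `h` to
the old vertices on the old decomposition. The `1` is harmless: both widths of a hypergraph with a
vertex `v` are at least `1`, because `X ↦ [v ∈ X]` is an edge-dominated polymatroid and `v` lies in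
some bag of every tree decomposition.
-/

section LeafGraph

variable {ι J : Type*}

/-- The graph obtained from `T` by attaching, for every `j : J`, a new vertex `Sum.inr j` whose only
neighbour is `t j`. It carries the nodes of the extended tree decomposition. -/
def attachLeaves (T : SimpleGraph ι) (t : J → ι) : SimpleGraph (ι ⊕ J) where
  Adj
    | .inl a, .inl b => T.Adj a b
    | .inl a, .inr j => a = t j
    | .inr j, .inl a => a = t j
    | .inr _, .inr _ => False
  symm := ⟨by
    rintro (a | i) (b | j) h
    exacts [SimpleGraph.Adj.symm h, h, h, h]⟩
  loopless := ⟨by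
    rintro (a | i) h
    exacts [T.irrefl h, h]⟩

variable {T : SimpleGraph ι} {t : J → ι}

@[simp]
lemma attachLeaves_adj_inl_inl {a b : ι} :
    (attachLeaves T t).Adj (.inl a) (.inl b) ↔ T.Adj a b := Iff.rfl

@[simp]
lemma attachLeaves_adj_inl_inr {a : ι} {j : J} :
    (attachLeaves T t).Adj (.inl a) (.inr j) ↔ a = t j := Iff.rfl

@[simp]
lemma attachLeaves_adj_inr_inl {j : J} {a : ι} :
    (attachLeaves T t).Adj (.inr j) (.inl a) ↔ a = t j := Iff.rfl

@[simp]
lemma not_attachLeaves_adj_inr_inr {i j : J} : ¬ (attachLeaves T t).Adj (.inr i) (.inr j) := id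

lemma connected_induce_attachLeaves {A : Set (ι ⊕ J)}
    (hconn : (T.induce (Sum.inl ⁻¹' A)).Connected)
    (hleaf : ∀ j, Sum.inr j ∈ A → Sum.inl (t j) ∈ A) :
    ((attachLeaves T t).induce A).Connected := by
  let incl : T.induce (Sum.inl ⁻¹' A) →g (attachLeaves T t).induce A :=
    { toFun := fun a => ⟨.inl a.1, a.2⟩
      map_rel' := id }
  obtain ⟨a₀⟩ := hconn.nonempty
  rw [SimpleGraph.connected_iff_exists_forall_reachable]
  refine ⟨incl a₀, ?_⟩
  have reach_inl (a : ι) (ha : Sum.inl a ∈ A) :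
      ((attachLeaves T t).induce A).Reachable (incl a₀) ⟨.inl a, ha⟩ :=
    (hconn.preconnected a₀ ⟨a, ha⟩).map incl
  rintro ⟨a | j, hx⟩
  · exact reach_inl a hx
  · exact (reach_inl (t j) (hleaf j hx)).trans (SimpleGraph.Adj.reachable rfl)

lemma connected_attachLeaves (hT : T.Connected) : (attachLeaves T t).Connected :=
  (SimpleGraph.induceUnivIso _).connected_iff.1 <|
    connected_induce_attachLeaves ((SimpleGraph.induceUnivIso T).connected_iff.2 hT)
      fun _ _ => trivial

lemma reachable_of_reachable_attachLeaves_deleteEdges {a b c d : ι}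
    (h : ((attachLeaves T t).deleteEdges {s(.inl a, .inl b)}).Reachable (.inl c) (.inl d)) :
    (T.deleteEdges {s(a, b)}).Reachable c d := by
  rw [SimpleGraph.reachable_iff_reflTransGen] at h ⊢
  -- Contracting every leaf onto its neighbour maps each remaining edge to an edge or to a point.
  refine Relation.ReflTransGen.lift' (Sum.elim id t) ?_ _ _ h
  rintro (x | i) (y | j) hxy
  · exact .single (by simpa using hxy)
  · obtain rfl : x = t j := by simpa using hxy
    exact .refl
  · obtain rfl : y = t i := by simpa using hxy
    exact .refl
  · simp at hxy

lemma isBridge_attachLeaves_inl_inr (j : J) :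
    (attachLeaves T t).IsBridge s(.inl (t j), .inr j) := by
  rw [SimpleGraph.isBridge_iff, SimpleGraph.reachable_comm,
    SimpleGraph.reachable_iff_reflTransGen]
  intro h
  obtain h | ⟨x, hx, -⟩ := Relation.ReflTransGen.cases_head h
  · exact Sum.inr_ne_inl h
  · rcases x with a | i <;> simp_all

lemma isAcyclic_attachLeaves (hT : T.IsAcyclic) : (attachLeaves T t).IsAcyclic := by
  rw [SimpleGraph.isAcyclic_iff_forall_adj_isBridge] at hT ⊢
  rintro (a | i) (b | j) hadj
  · exact fun h => hT hadj (reachable_of_reachable_attachLeaves_deleteEdges h)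
  · obtain rfl := attachLeaves_adj_inl_inr.1 hadj
    exact isBridge_attachLeaves_inl_inr j
  · obtain rfl := attachLeaves_adj_inr_inl.1 hadj
    rw [Sym2.eq_swap]
    exact isBridge_attachLeaves_inl_inr i
  · exact hadj.elim

lemma isTree_attachLeaves (hT : T.IsTree) : (attachLeaves T t).IsTree :=
  ⟨connected_attachLeaves hT.connected, isAcyclic_attachLeaves hT.isAcyclic⟩

end LeafGraph

section Polymatroid

variable {V V' : Type*} [DecidableEq V] [DecidableEq V']

lemma IsPolymatroid.comp_image {h : Finset V' → NNReal} (hh : IsPolymatroid h) {f : V → V'}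
    (hf : f.Injective) : IsPolymatroid fun X => h (X.image f) := by
  obtain ⟨hempty, hmono, hsubmod⟩ := hh
  refine ⟨by simpa using hempty, fun X Y hXY => hmono _ _ (Finset.image_subset_image hXY),
    fun X Y => ?_⟩
  simpa only [Finset.image_union, Finset.image_inter _ _ hf] using hsubmod _ _

lemma isPolymatroid_ite_mem (v : V) : IsPolymatroid fun X => if v ∈ X then 1 else 0 := by
  refine ⟨by simp, fun X Y hXY => ?_, fun X Y => ?_⟩
  · by_cases hv : v ∈ X
    · simp [hv, hXY hv]
    · simp [hv]
  · by_cases hX : v ∈ X <;> by_cases hY : v ∈ Y <;> simp [hX, hY]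

lemma edgeDominated_ite_mem (E : Finset (Finset V)) (v : V) :
    EdgeDominated E fun X => if v ∈ X then 1 else 0 := fun S _ => by
  by_cases hv : v ∈ S <;> simp [hv]

end Polymatroid

section Width

variable {V : Type*} {E : Finset (Finset V)}

lemma TreeDecomp.exists_mem_bag (D : TreeDecomp E) (v : V) : ∃ a, v ∈ D.bag a :=
  let ⟨a, ha⟩ := (D.rip v).nonempty
  ⟨a, ha⟩

lemma TreeDecomp.le_width (D : TreeDecomp E) (h : Finset V → NNReal) (a : D.ι) :
    (h (D.bag a) : ℝ≥0∞) ≤ D.width h :=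
  le_iSup (fun a => (h (D.bag a) : ℝ≥0∞)) a

variable [DecidableEq V]

lemma TreeDecomp.one_le_width_ite_mem (D : TreeDecomp E) (v : V) :
    1 ≤ D.width fun X => if v ∈ X then 1 else 0 := by
  obtain ⟨a, ha⟩ := D.exists_mem_bag v
  simpa [ha] using D.le_width (fun X => if v ∈ X then 1 else 0) a

lemma iInf_width_le_subwF (F : Finset V) {h : Finset V → NNReal} (hpoly : IsPolymatroid h)
    (hdom : EdgeDominated E h) :
    ⨅ D : {D : TreeDecomp E // D.FConnex F}, D.1.width h ≤ subwF E F :=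
  le_iSup (fun h : {h : Finset V → NNReal // IsPolymatroid h ∧ EdgeDominated E h} =>
    ⨅ D : {D : TreeDecomp E // D.FConnex F}, D.1.width h.1) ⟨h, hpoly, hdom⟩

variable (E) (F : Finset V)

lemma subwF_le_fhtwF : subwF E F ≤ fhtwF E F :=
  iSup_iInf_le_iInf_iSup _

lemma one_le_subwF [Nonempty V] : 1 ≤ subwF E F :=
  let v := Classical.arbitrary V
  (le_iInf fun D => D.1.one_le_width_ite_mem v).trans <|
    iInf_width_le_subwF F (isPolymatroid_ite_mem v) (edgeDominated_ite_mem E v)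

lemma one_le_fhtwF [Nonempty V] : 1 ≤ fhtwF E F :=
  (one_le_subwF E F).trans (subwF_le_fhtwF E F)

end Width

section PendantExtension

variable {V V' : Type*} {J : Type} [DecidableEq V'] (e : V ⊕ J ≃ V') (i : J → V)
  {E : Finset (Finset V)}

namespace TreeDecomp

/-- The bags of the extended decomposition: the old bags, and the pendant edges at the leaves. -/
def pendantBag (D : TreeDecomp E) : D.ι ⊕ J → Finset V'
  | .inl a => (D.bag a).image (e ∘ Sum.inl)
  | .inr j => {e (.inl (i j)), e (.inr j)}

variable {e i} (D : TreeDecomp E)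

lemma mem_pendantBag_inl {v : V} {a : D.ι} :
    e (.inl v) ∈ D.pendantBag e i (.inl a) ↔ v ∈ D.bag a := by
  simp [pendantBag]

lemma mem_pendantBag_inr {v : V} {j : J} :
    e (.inl v) ∈ D.pendantBag e i (.inr j) ↔ v = i j := by
  simp [pendantBag]

lemma setOf_fresh_mem_pendantBag (j : J) :
    {x | e (.inr j) ∈ D.pendantBag e i x} = {.inr j} := by
  ext (a | k) <;> simp [pendantBag, eq_comm]

end TreeDecomp

variable [Fintype J]

/-- The hyperedges on `V'` consisting of those of `E` and of one pendant edge `{i j, j}` for every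
fresh vertex `j : J`. The bijection `e` presents `V'` as the disjoint union of the old vertices `V`
and the fresh vertices `J`. -/
def pendantExtension (E : Finset (Finset V)) : Finset (Finset V') :=
  E.image (Finset.image (e ∘ Sum.inl)) ∪
    Finset.univ.image fun j => {e (.inl (i j)), e (.inr j)}

variable {e i}

lemma image_mem_pendantExtension {S : Finset V} (hS : S ∈ E) :
    S.image (e ∘ Sum.inl) ∈ pendantExtension e i E :=
  Finset.mem_union_left _ (Finset.mem_image_of_mem _ hS)

lemma pair_mem_pendantExtension (j : J) :
    {e (.inl (i j)), e (.inr j)} ∈ pendantExtension e i E :=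
  Finset.mem_union_right _ (Finset.mem_image_of_mem _ (Finset.mem_univ j))

lemma EdgeDominated.of_pendantExtension {h : Finset V' → NNReal}
    (hh : EdgeDominated (pendantExtension e i E) h) :
    EdgeDominated E fun X => h (X.image (e ∘ Sum.inl)) :=
  fun _ hS => hh _ (image_mem_pendantExtension hS)

namespace TreeDecomp

variable (e i) in
/-- The tree decomposition of the pendant extension in which each pendant edge `{i j, j}` is the
bag of a new leaf, attached to an arbitrary node whose bag contains `i j`. The fresh vertices
form a `Type` because `TreeDecomp` takes its nodes from there. -/
noncomputable def attachPendants (D : TreeDecomp E) : TreeDecomp (pendantExtension e i E) where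
  ι := D.ι ⊕ J
  fin := haveI := D.fin; inferInstance
  T := attachLeaves D.T fun j => (D.exists_mem_bag (i j)).choose
  isTree := isTree_attachLeaves D.isTree
  bag := D.pendantBag e i
  covers S hS := by
    rcases Finset.mem_union.1 hS with hS | hS
    · obtain ⟨S₀, hS₀, rfl⟩ := Finset.mem_image.1 hS
      obtain ⟨a, ha⟩ := D.covers S₀ hS₀
      exact ⟨.inl a, Finset.image_subset_image ha⟩
    · obtain ⟨j, -, rfl⟩ := Finset.mem_image.1 hS
      exact ⟨.inr j, subset_rfl⟩
  rip v := by
    obtain ⟨v | j, rfl⟩ := e.surjective v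
    · apply connected_induce_attachLeaves
      · have nodes_eq : Sum.inl ⁻¹' {x | e (.inl v) ∈ D.pendantBag e i x} = {a | v ∈ D.bag a} :=
          Set.ext fun a => D.mem_pendantBag_inl
        rw [nodes_eq]
        exact D.rip v
      · intro j hj
        obtain rfl := D.mem_pendantBag_inr.1 hj
        exact D.mem_pendantBag_inl.2 (D.exists_mem_bag (i j)).choose_spec
    · rw [setOf_fresh_mem_pendantBag]
      exact .of_subsingleton

variable {D : TreeDecomp E}

lemma FConnex.attachPendants {F : Finset V} (hD : D.FConnex F) :
    (D.attachPendants e i).FConnex (F.image (e ∘ Sum.inl)) := by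
  obtain ⟨A, hconn, hA⟩ := hD
  refine ⟨Sum.inl '' A, connected_induce_attachLeaves (A := Sum.inl '' A) ?_ (by simp), ?_⟩
  · rwa [Set.preimage_image_eq _ Sum.inl_injective]
  · suffices ∀ v, v ∈ F.image (e ∘ Sum.inl) ↔ ∃ x ∈ Sum.inl '' A, v ∈ D.pendantBag e i x from this
    intro v
    simp only [Set.exists_mem_image, pendantBag, Finset.mem_image, hA]
    grind

lemma width_attachPendants_le {h : Finset V' → NNReal}
    (hh : EdgeDominated (pendantExtension e i E) h) :
    (D.attachPendants e i).width h ≤ D.width (fun X => h (X.image (e ∘ Sum.inl))) ⊔ 1 := by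
  refine iSup_le ?_
  rintro (a | j)
  · exact le_sup_of_le_left (D.le_width (fun X => h (X.image (e ∘ Sum.inl))) a)
  · exact le_sup_of_le_right (mod_cast hh _ (pair_mem_pendantExtension j))

end TreeDecomp

variable [DecidableEq V]

lemma fhtwF_pendantExtension_le_sup_one (F : Finset V) :
    fhtwF (pendantExtension e i E) (F.image (e ∘ Sum.inl)) ≤ fhtwF E F ⊔ 1 := by
  rw [fhtwF, fhtwF, iInf_sup_eq]
  refine le_iInf fun D => iInf_le_of_le ⟨_, D.2.attachPendants⟩ <| iSup_le fun ⟨h, hpoly, hdom⟩ =>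
    (TreeDecomp.width_attachPendants_le hdom).trans <| sup_le_sup_right ?_ 1
  exact le_iSup_of_le (ι := {h : Finset V → NNReal // IsPolymatroid h ∧ EdgeDominated E h})
    ⟨_, hpoly.comp_image (e.injective.comp Sum.inl_injective), hdom.of_pendantExtension⟩ le_rfl

lemma subwF_pendantExtension_le_sup_one (F : Finset V) :
    subwF (pendantExtension e i E) (F.image (e ∘ Sum.inl)) ≤ subwF E F ⊔ 1 := by
  refine iSup_le fun ⟨h, hpoly, hdom⟩ => ?_
  calc ⨅ D' : {D' : TreeDecomp (pendantExtension e i E) // D'.FConnex (F.image (e ∘ Sum.inl))},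
        D'.1.width h
      ≤ ⨅ D : {D : TreeDecomp E // D.FConnex F},
          D.1.width (fun X => h (X.image (e ∘ Sum.inl))) ⊔ 1 :=
        le_iInf fun D => iInf_le_of_le ⟨_, D.2.attachPendants⟩
          (TreeDecomp.width_attachPendants_le hdom)
    _ = (⨅ D : {D : TreeDecomp E // D.FConnex F},
          D.1.width fun X => h (X.image (e ∘ Sum.inl))) ⊔ 1 := (iInf_sup_eq _ _).symm
    _ ≤ subwF E F ⊔ 1 := sup_le_sup_right (iInf_width_le_subwF F
        (hpoly.comp_image (e.injective.comp Sum.inl_injective)) hdom.of_pendantExtension) 1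

end PendantExtension

lemma pendantExtension_finSumFinEquiv {n k : ℕ} (idx : Fin (n + k) → Fin n)
    (E : Finset (Finset (Fin n))) :
    pendantExtension finSumFinEquiv (idx ∘ Fin.natAdd n) E =
      E.image (fun S => S.image (Fin.castAdd k)) ∪
        (Finset.univ.filter fun j : Fin (n + k) => n ≤ (j : ℕ)).image
          fun j => {Fin.castAdd k (idx j), j} := by
  have fresh_eq : (Finset.univ.filter fun j : Fin (n + k) => n ≤ (j : ℕ)) =
      Finset.univ.image (Fin.natAdd n) := by
    rw [← Finset.coe_inj]
    simp [Fin.range_natAdd]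
  rw [fresh_eq, Finset.image_image]
  rfl

theorem fhtwF_subwF_extension_le_general {V V' : Type*} {J : Type} [Nonempty V] [DecidableEq V]
    [DecidableEq V'] [Fintype J] (e : V ⊕ J ≃ V') (i : J → V) (E : Finset (Finset V))
    (F : Finset V) :
    fhtwF (pendantExtension e i E) (F.image (e ∘ Sum.inl)) ≤ fhtwF E F ∧
      subwF (pendantExtension e i E) (F.image (e ∘ Sum.inl)) ≤ subwF E F :=
  ⟨(fhtwF_pendantExtension_le_sup_one F).trans_eq (sup_of_le_left (one_le_fhtwF E F)),
    (subwF_pendantExtension_le_sup_one F).trans_eq (sup_of_le_left (one_le_subwF E F))⟩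

/-- Adding fresh vertices `j ∈ [n']∖[n]`, each attached by a single binary edge
`S_j = {i_j, j}` to an old vertex `i_j ∈ [n]`, does not increase the fractional
hypertree width `fhtw_F` or the submodular width `subw_F` (assuming some vertex of
the original hypergraph belongs to a hyperedge). -/
theorem fhtwF_subwF_extension_le
    {n n' : ℕ} (hnn' : n < n')
    (E : Finset (Finset (Fin n))) (F : Finset (Fin n))
    (hne : ∃ S ∈ E, S.Nonempty)
    (idx : Fin n' → Fin n)
    (E' : Finset (Finset (Fin n')))
    (hE' : E' = E.image (fun S => S.image (Fin.castLE hnn'.le)) ∪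
        (Finset.univ.filter (fun j : Fin n' => n ≤ (j : ℕ))).image
          (fun j => ({Fin.castLE hnn'.le (idx j), j} : Finset (Fin n')))) :
    fhtwF E' (F.image (Fin.castLE hnn'.le)) ≤ fhtwF E F ∧
    subwF E' (F.image (Fin.castLE hnn'.le)) ≤ subwF E F := by
  obtain ⟨k, rfl⟩ := Nat.exists_eq_add_of_le hnn'.le
  have : Nonempty (Fin n) := let ⟨_, _, v, _⟩ := hne; ⟨v⟩
  rw [hE'.trans (pendantExtension_finSumFinEquiv idx E).symm]
  exact fhtwF_subwF_extension_le_general finSumFinEquiv (idx ∘ Fin.natAdd n) E F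
end
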